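/- arXiv:1305.2669 — 2 statements merged into one kernel-verified Lean document; each statement's English description precedes it below -/
import Mathlib

section
/- Let Ω ⊂ ℝⁿ (n ≥ 2) be a bounded open convex domain and let u be a function of class C³ on a neighborhood of the closure of Ω that is strictly convex (its Hessian D²u is positive definite) and satisfies det D²u = 1 in Ω together with u = 0 on ∂Ω. Then the function φ(x) = Σ_{k,l=1}^n u^{kl}(x) u_k(x) u_l(x) − 2u(x) attains its maximum over the closure of Ω on the boundary ∂Ω; i.e., for every x ∈ Ω, φ(x) ≤ sup_{y ∈ ∂Ω} φ(y). -/
/-!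
The proof passes to the Legendre transform and uses the scaling invariance of the equation there.

Near a point of `Ω` the gradient map `x ↦ p = Du(x)` is a local diffeomorphism with inverse `X`,
and `v(p) = ⟨X(p), p⟩ - u(X(p))` satisfies `Dv = X`, `D²v(p) = (D²u(X(p)))⁻¹`, `det D²v = 1`. In
these variables `φ = D²v(p, p) - 2 ⟨Dv, p⟩ + 2 v`. With `v_λ(p) = λ⁻² v(λ p)` this is
`φ = (∂²/∂λ² + 2 ∂/∂λ) v_λ` at `λ = 1`, and each `v_λ` again has Hessian determinant `1`.

For positive definite `A`, `B` of determinant `1`, the arithmetic-geometric mean inequality gives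
`tr (A⁻¹ B) ≥ n` (`card_le_trace_inv_mul`). Hence `L (v_λ - v) ≥ 0` for the elliptic operator
`L h = tr ((D²v)⁻¹ D²h)`. The difference quotient
`(t⁻² + t⁻¹) (v_{1+t} - v) + (t⁻² - t⁻¹) (v_{1-t} - v)`
has nonnegative coefficients for `0 < t < 1`, so it is a subsolution, and it converges to `φ`
locally uniformly as `t → 0⁺` (`scalingQuotient_uniform`). Working with these quotients makes
second derivatives of `φ`, hence fourth derivatives of `u`, unnecessary.

If `φ + ε |Du|²` had a local maximum at an interior point, then, for small `t`, the quotient plus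
`ε |p|² - (ε / 2) |p - p₀|²` would have an interior local maximum near `p₀`, which contradicts
the strict inequality `L (…) > 0` (`not_isLocalMax_legendrePhi`, `not_isLocalMax_phiFn`). So the
maximum of `φ + ε |Du|²` over the compact set `closure Ω` lies on the frontier, and letting
`ε → 0` gives the claim.
-/

open scoped BigOperators

/-- First partial derivative in direction `i`. -/
noncomputable def pd {n : ℕ} (i : Fin n) (f : EuclideanSpace ℝ (Fin n) → ℝ) :
    EuclideanSpace ℝ (Fin n) → ℝ :=
  fun x => fderiv ℝ f x (EuclideanSpace.single i 1)

/-- The Hessian matrix `(u_{ij})` of `u` at `x`. -/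
noncomputable def hess {n : ℕ} (u : EuclideanSpace ℝ (Fin n) → ℝ)
    (x : EuclideanSpace ℝ (Fin n)) : Matrix (Fin n) (Fin n) ℝ :=
  Matrix.of fun i j => pd i (pd j u) x

/-- `φ = Σ u^{kl} u_k u_l − 2u`. -/
noncomputable def phiFn {n : ℕ} (u : EuclideanSpace ℝ (Fin n) → ℝ)
    (x : EuclideanSpace ℝ (Fin n)) : ℝ :=
  (∑ k, ∑ l, (hess u x)⁻¹ k l * pd k u x * pd l u x) - 2 * u x

/-! ### Linear algebra and one-variable calculus -/

open Matrix MatrixOrder in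
lemma exists_factor {n : ℕ} {A : Matrix (Fin n) (Fin n) ℝ} (hA : A.PosSemidef) :
    ∃ C : Matrix (Fin n) (Fin n) ℝ, A = Cᴴ * C := by
  obtain ⟨C, hC⟩ := CStarAlgebra.nonneg_iff_eq_star_mul_self.mp hA.nonneg
  exact ⟨C, hC⟩

open Matrix in
lemma trace_mul_nonneg_of_posSemidef {n : ℕ} {P N : Matrix (Fin n) (Fin n) ℝ}
    (hP : P.PosSemidef) (hN : N.PosSemidef) : 0 ≤ (P * N).trace := by
  obtain ⟨C, rfl⟩ := exists_factor hP
  rw [Matrix.mul_assoc, Matrix.trace_mul_comm]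
  exact (hN.mul_mul_conjTranspose_same C).trace_nonneg

open Matrix in
/-- Arithmetic-geometric mean inequality for matrices: `A⁻¹ B` is similar to a positive definite
matrix of determinant `1`, and `log μ ≤ μ - 1` is summed over its eigenvalues `μ`. -/
lemma card_le_trace_inv_mul {n : ℕ} {A B : Matrix (Fin n) (Fin n) ℝ}
    (hA : A.PosDef) (hB : B.PosDef) (hdA : A.det = 1) (hdB : B.det = 1) :
    (n : ℝ) ≤ (A⁻¹ * B).trace := by
  obtain ⟨C, hC⟩ := exists_factor hA.inv.posSemidef
  have hdC : C.det * C.det = 1 := by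
    have h := congrArg Matrix.det hC
    rw [Matrix.det_nonsing_inv, hdA, Matrix.det_mul, Matrix.det_conjTranspose] at h
    simpa using h.symm
  have hCu : IsUnit C := by
    rw [Matrix.isUnit_iff_isUnit_det]
    exact IsUnit.of_mul_eq_one _ hdC
  have hD : (C * B * Cᴴ).PosDef := (hCu.posDef_star_right_conjugate_iff).mpr hB
  have hdet : (C * B * Cᴴ).det = 1 := by
    rw [Matrix.det_mul, Matrix.det_mul, Matrix.det_conjTranspose, hdB]
    simpa using hdC
  rw [hC, Matrix.mul_assoc, Matrix.trace_mul_comm, hD.isHermitian.trace_eq_sum_eigenvalues]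
  rw [hD.isHermitian.det_eq_prod_eigenvalues] at hdet
  simp only [RCLike.ofReal_real_eq_id, id] at hdet ⊢
  have hlog : ∑ i, Real.log (hD.isHermitian.eigenvalues i) = 0 := by
    rw [← Real.log_prod (fun i _ => (hD.eigenvalues_pos i).ne'), hdet, Real.log_one]
  have hle : ∑ i, Real.log (hD.isHermitian.eigenvalues i)
      ≤ ∑ i, (hD.isHermitian.eigenvalues i - 1) :=
    Finset.sum_le_sum fun i _ => Real.log_le_sub_one_of_pos (hD.eigenvalues_pos i)
  rw [hlog, Finset.sum_sub_distrib] at hle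
  simp at hle
  exact hle

/-- Mean value form of the symmetric second and first differences of a twice differentiable
function. -/
lemma exists_second_difference {f f1 f2 : ℝ → ℝ} {t : ℝ} (ht : 0 < t)
    (h1 : ∀ s ∈ Set.Icc (-t) t, HasDerivAt f (f1 s) s)
    (h2 : ∀ s ∈ Set.Icc (-t) t, HasDerivAt f1 (f2 s) s) :
    ∃ ζ ∈ Set.Ioo (-t) t, ∃ ξ ∈ Set.Ioo (-t) t,
      f t + f (-t) - 2 * f 0 = t ^ 2 * f2 ζ ∧ f t - f (-t) = 2 * t * f1 ξ := by
  obtain ⟨ξ, hξ, hξ'⟩ := exists_hasDerivAt_eq_slope f f1 (a := -t) (b := t) (by linarith)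
    (fun s hs => (h1 s hs).continuousAt.continuousWithinAt)
    (fun s hs => h1 s (Set.Ioo_subset_Icc_self hs))
  have hg : ∀ s ∈ Set.Icc 0 t, HasDerivAt (fun s => f s + f (-s)) (f1 s - f1 (-s)) s := by
    intro s hs
    have ha := h1 s ⟨by linarith [hs.1], hs.2⟩
    have hb := h1 (-s) ⟨by linarith [hs.2], by linarith [hs.1]⟩
    have hc : HasDerivAt (fun s => f (-s)) (f1 (-s) * (-1)) s :=
      HasDerivAt.comp s hb (hasDerivAt_neg s)
    exact (ha.add hc).congr_deriv (by ring)
  obtain ⟨c, hc, hc'⟩ := exists_ratio_hasDerivAt_eq_ratio_slope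
    (fun s => f s + f (-s)) (fun s => f1 s - f1 (-s)) ht
    (fun s hs => (hg s hs).continuousAt.continuousWithinAt)
    (fun s hs => hg s (Set.Ioo_subset_Icc_self hs))
    (fun s => s ^ 2) (fun s => 2 * s) (by fun_prop)
    (fun s _ => by simpa using hasDerivAt_pow 2 s)
  have hsub : ∀ s ∈ Set.Icc (-c) c, s ∈ Set.Icc (-t) t := fun s hs =>
    ⟨by linarith [hs.1, hc.2], by linarith [hs.2, hc.2]⟩
  obtain ⟨ζ, hζ, hζ'⟩ := exists_hasDerivAt_eq_slope f1 f2 (a := -c) (b := c)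
    (by linarith [hc.1])
    (fun s hs => (h2 s (hsub s hs)).continuousAt.continuousWithinAt)
    (fun s hs => h2 s (hsub s (Set.Ioo_subset_Icc_self hs)))
  have hc0 : 0 < c := hc.1
  refine ⟨ζ, ⟨by linarith [hζ.1, hc.2], by linarith [hζ.2, hc.2]⟩, ξ, hξ, ?_, ?_⟩
  · rw [eq_div_iff (by linarith)] at hζ'
    simp only [neg_zero] at hc'
    rw [← hζ'] at hc'
    apply mul_right_cancel₀ (b := 2 * c) (by positivity)
    linarith
  · rw [hξ']
    field_simp
    ring

/-- Second derivative test along lines: `g` is the gradient of `h` and `M` the derivative of `g`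
at the local maximum `q`. -/
lemma hessian_nonpos_of_isLocalMax {E : Type*} [NormedAddCommGroup E] [InnerProductSpace ℝ E]
    {h : E → ℝ} {g : E → E} {M : E →L[ℝ] E} {q : E}
    (hg : ∀ᶠ p in nhds q, HasFDerivAt h (innerSL ℝ (g p)) p)
    (hM : HasFDerivAt g M q) (hmax : IsLocalMax h q) (e : E) :
    inner ℝ (M e) e ≤ 0 := by
  by_contra! hpos
  set γ : ℝ → E := fun t => q + t • e with hγ
  have hγd : ∀ t, HasDerivAt γ e t := fun t => by
    have := ((hasDerivAt_id t).smul_const e).const_add q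
    rwa [one_smul] at this
  have hγ0 : γ 0 = q := by simp [hγ]
  have hγc : Filter.Tendsto γ (nhds 0) (nhds q) := by
    simpa [hγ0] using (hγd 0).continuousAt.tendsto
  have hd : ∀ᶠ t in nhds (0 : ℝ), HasDerivAt (h ∘ γ) (inner ℝ (g (γ t)) e) t := by
    filter_upwards [hγc.eventually hg] with t ht
    simpa using ht.comp_hasDerivAt t (hγd t)
  have hde : deriv (h ∘ γ) =ᶠ[nhds 0] fun t => inner ℝ (g (γ t)) e :=
    hd.mono fun t ht => ht.deriv
  have hdd : HasDerivAt (fun t => inner ℝ (g (γ t)) e) (inner ℝ (M e) e) 0 := by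
    have h1 : HasDerivAt (g ∘ γ) (M e) 0 :=
      HasFDerivAt.comp_hasDerivAt 0 (by rw [hγ0]; exact hM) (hγd 0)
    simpa using h1.inner ℝ (hasDerivAt_const (0 : ℝ) e)
  have hmaxγ : IsLocalMax (h ∘ γ) 0 := by
    have := hγc.eventually hmax
    filter_upwards [this] with t ht
    simpa [hγ0] using ht
  have h2 : deriv (deriv (h ∘ γ)) 0 = inner ℝ (M e) e := by
    rw [hde.deriv_eq, hdd.deriv]
  have hmin : IsLocalMin (h ∘ γ) 0 :=
    isLocalMin_of_deriv_deriv_pos (by rw [h2]; exact hpos) hmaxγ.deriv_eq_zero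
      hd.self_of_nhds.continuousAt
  -- A local minimum and maximum at once: `h ∘ γ` is locally constant, so its second derivative is `0`.
  have hconst : (h ∘ γ) =ᶠ[nhds 0] fun _ => (h ∘ γ) 0 := by
    filter_upwards [hmin, hmaxγ] with t h1 h2
    exact le_antisymm h2 h1
  have h3 : deriv (deriv (h ∘ γ)) 0 = 0 := by
    rw [hconst.deriv.deriv_eq]
    simp
  linarith

/-! ### Scaling quotients in Legendre coordinates -/

/-- The function `φ` in Legendre coordinates: `D²v(p, p) - 2 ⟨Dv, p⟩ + 2 v`, where `X` stands for the
gradient of `v` and `T` for the derivative of `X`. -/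
noncomputable def legendrePhi {E : Type*} [NormedAddCommGroup E] [InnerProductSpace ℝ E]
    (v : E → ℝ) (X : E → E) (T : E → E →L[ℝ] E) (p : E) : ℝ :=
  inner ℝ (T p p) p - 2 * inner ℝ (X p) p + 2 * v p

/-- The difference quotient `(t⁻² + t⁻¹) (v_{1+t} - v) + (t⁻² - t⁻¹) (v_{1-t} - v)` along the scaling
`v_λ(p) = λ⁻² v(λ p)`. It is a second-order difference quotient plus twice a first-order one. -/
noncomputable def scalingQuotient {E : Type*} [NormedAddCommGroup E] [InnerProductSpace ℝ E]
    (v : E → ℝ) (t : ℝ) (p : E) : ℝ :=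
  (1 / t ^ 2 + 1 / t) * (((1 + t) ^ 2)⁻¹ * v ((1 + t) • p) - v p)
    + (1 / t ^ 2 - 1 / t) * (((1 + -t) ^ 2)⁻¹ * v ((1 + -t) • p) - v p)

lemma hasDerivAt_inv_pow_one_add (k : ℕ) {s : ℝ} (hs : 1 + s ≠ 0) :
    HasDerivAt (fun s : ℝ => ((1 + s) ^ (k + 1))⁻¹) (-(k + 1) * ((1 + s) ^ (k + 2))⁻¹) s := by
  have h := (((hasDerivAt_id s).const_add 1).pow (k + 1)).inv (pow_ne_zero _ hs)
  refine h.congr_deriv ?_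
  simp
  field_simp
  ring

/-- The scaling quotients converge to `legendrePhi` uniformly on compact sets. By the mean value
theorem the quotient is `F2 (ζ, p) + 2 F1 (ξ, p)` with `|ζ|, |ξ| < t`, where `F1`, `F2` are the first
and second derivatives of `s ↦ (1 + s)⁻² v((1 + s) p)`, and these are jointly continuous in `(s, p)`. -/
lemma scalingQuotient_uniform {E : Type*} [NormedAddCommGroup E] [InnerProductSpace ℝ E]
    {v : E → ℝ} {X : E → E} {T : E → E →L[ℝ] E} {B K : Set E} (hB : IsOpen B)
    (hK : IsCompact K) (hKB : K ⊆ B)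
    (hv : ∀ p ∈ B, HasFDerivAt v (innerSL ℝ (X p)) p)
    (hX : ∀ p ∈ B, HasFDerivAt X (T p) p) (hT : ContinuousOn T B) {δ : ℝ} (hδ : 0 < δ) :
    ∀ᶠ t in nhdsWithin (0 : ℝ) (Set.Ioi 0), ∀ p ∈ K,
      |scalingQuotient v t p - legendrePhi v X T p| < δ := by
  set F1 : ℝ × E → ℝ := fun z => -2 * ((1 + z.1) ^ 3)⁻¹ * v ((1 + z.1) • z.2)
    + ((1 + z.1) ^ 2)⁻¹ * inner ℝ (X ((1 + z.1) • z.2)) z.2 with hF1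
  set F2 : ℝ × E → ℝ := fun z => 6 * ((1 + z.1) ^ 4)⁻¹ * v ((1 + z.1) • z.2)
    - 4 * ((1 + z.1) ^ 3)⁻¹ * inner ℝ (X ((1 + z.1) • z.2)) z.2
    + ((1 + z.1) ^ 2)⁻¹ * inner ℝ (T ((1 + z.1) • z.2) z.2) z.2 with hF2
  have hsc : ∀ p : E, ContinuousAt (fun z : ℝ × E => (1 + z.1) • z.2) (0, p) := fun p => by
    fun_prop
  have hcont : ∀ p ∈ B, ContinuousAt F1 (0, p) ∧ ContinuousAt F2 (0, p) := by
    intro p hp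
    have e : (1 + ((0 : ℝ), p).1) • ((0 : ℝ), p).2 = p := by simp
    have c1 : ContinuousAt (fun z : ℝ × E => v ((1 + z.1) • z.2)) (0, p) :=
      ContinuousAt.comp (g := v) (by rw [e]; exact (hv p hp).continuousAt) (hsc p)
    have c2 : ContinuousAt (fun z : ℝ × E => X ((1 + z.1) • z.2)) (0, p) :=
      ContinuousAt.comp (g := X) (by rw [e]; exact (hX p hp).continuousAt) (hsc p)
    have c3 : ContinuousAt (fun z : ℝ × E => T ((1 + z.1) • z.2)) (0, p) :=
      ContinuousAt.comp (g := T)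
        (by rw [e]; exact hT.continuousAt (hB.mem_nhds hp)) (hsc p)
    have cs : ContinuousAt (fun z : ℝ × E => z.2) (0, p) := continuousAt_snd
    have ci : ∀ k : ℕ, ContinuousAt (fun z : ℝ × E => ((1 + z.1) ^ k)⁻¹) (0, p) := fun k =>
      ContinuousAt.inv₀ (by fun_prop) (by simp)
    have c4 := c2.inner (𝕜 := ℝ) cs
    have c5 := (c3.clm_apply cs).inner (𝕜 := ℝ) cs
    constructor
    · exact ((continuousAt_const.mul (ci 3)).mul c1).add ((ci 2).mul c4)
    · exact (((continuousAt_const.mul (ci 4)).mul c1).sub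
        ((continuousAt_const.mul (ci 3)).mul c4)).add ((ci 2).mul c5)
  have hev : ∀ᶠ s in nhds (0 : ℝ), ∀ p ∈ K, (1 + s) • p ∈ B ∧
      |F1 (s, p) - F1 (0, p)| < δ / 4 ∧ |F2 (s, p) - F2 (0, p)| < δ / 4 := by
    refine hK.eventually_forall_of_forall_eventually (fun p hp => ?_)
    have hpB := hKB hp
    have e1 : ∀ᶠ z : ℝ × E in nhds (0, p), (1 + z.1) • z.2 ∈ B :=
      (hsc p).eventually (by simpa using hB.mem_nhds hpB)
    have key : ∀ F : ℝ × E → ℝ, ContinuousAt F (0, p) →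
        ∀ᶠ z : ℝ × E in nhds (0, p), |F (z.1, z.2) - F (0, z.2)| < δ / 4 := by
      intro F hF
      have h0 : ContinuousAt (fun z : ℝ × E => F (0, z.2)) (0, p) :=
        ContinuousAt.comp (g := F) (f := fun z : ℝ × E => ((0 : ℝ), z.2)) hF (by fun_prop)
      have h1 := (hF.sub h0).abs
      exact h1.eventually_lt continuousAt_const (by simpa using by positivity)
    filter_upwards [e1, key F1 (hcont p hpB).1, key F2 (hcont p hpB).2] with z h1 h2 h3
    exact ⟨h1, h2, h3⟩
  obtain ⟨ρ, hρ, hball⟩ := Metric.eventually_nhds_iff.mp hev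
  have hsmall : ∀ᶠ t in nhdsWithin (0 : ℝ) (Set.Ioi 0), t < min ρ 1 :=
    nhdsWithin_le_nhds (eventually_lt_nhds (by positivity))
  filter_upwards [hsmall, self_mem_nhdsWithin] with t htρ ht0 p hp
  have ht0 : 0 < t := ht0
  have hIcc : ∀ s ∈ Set.Icc (-t) t, dist s 0 < ρ ∧ 0 < 1 + s := by
    intro s hs
    have h1 := lt_of_lt_of_le htρ (min_le_left _ _)
    have h2 := lt_of_lt_of_le htρ (min_le_right _ _)
    refine ⟨?_, by linarith [hs.1]⟩
    rw [Real.dist_eq, sub_zero]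
    exact lt_of_le_of_lt (abs_le.mpr hs) h1
  have hγ : ∀ s : ℝ, HasDerivAt (fun s : ℝ => (1 + s) • p) p s := fun s => by
    have := ((hasDerivAt_id s).const_add 1).smul_const p
    rwa [one_smul] at this
  have hvd : ∀ s ∈ Set.Icc (-t) t,
      HasDerivAt (fun s : ℝ => v ((1 + s) • p)) (inner ℝ (X ((1 + s) • p)) p) s := fun s hs => by
    have hm := (hball (hIcc s hs).1 p hp).1
    exact (hv _ hm).comp_hasDerivAt s (hγ s)
  have hXd : ∀ s ∈ Set.Icc (-t) t,
      HasDerivAt (fun s : ℝ => inner ℝ (X ((1 + s) • p)) p)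
        (inner ℝ (T ((1 + s) • p) p) p) s := fun s hs => by
    have hm := (hball (hIcc s hs).1 p hp).1
    have h1 : HasDerivAt (fun s : ℝ => X ((1 + s) • p)) (T ((1 + s) • p) p) s :=
      (hX _ hm).comp_hasDerivAt s (hγ s)
    simpa using h1.inner ℝ (hasDerivAt_const s p)
  obtain ⟨ζ, hζ, ξ, hξ, e2, e1⟩ := exists_second_difference (t := t)
    (f := fun s => ((1 + s) ^ 2)⁻¹ * v ((1 + s) • p)) (f1 := fun s => F1 (s, p))
    (f2 := fun s => F2 (s, p)) ht0
    (fun s hs => by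
      refine ((hasDerivAt_inv_pow_one_add 1 (hIcc s hs).2.ne').mul (hvd s hs)).congr_deriv ?_
      simp only [hF1]
      push_cast
      ring)
    (fun s hs => by
      have a1 := (hasDerivAt_inv_pow_one_add 2 (hIcc s hs).2.ne').const_mul (-2)
      have a2 := hasDerivAt_inv_pow_one_add 1 (hIcc s hs).2.ne'
      refine ((a1.mul (hvd s hs)).add (a2.mul (hXd s hs))).congr_deriv ?_
      simp only [hF2]
      push_cast
      ring)
  have hq : scalingQuotient v t p = F2 (ζ, p) + 2 * F1 (ξ, p) := by
    have r1 : F2 (ζ, p) = (((1 + t) ^ 2)⁻¹ * v ((1 + t) • p)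
        + ((1 + -t) ^ 2)⁻¹ * v ((1 + -t) • p) - 2 * v p) / t ^ 2 := by
      rw [eq_div_iff (by positivity)]
      simp at e2
      linarith
    have r2 : 2 * F1 (ξ, p) = (((1 + t) ^ 2)⁻¹ * v ((1 + t) • p)
        - ((1 + -t) ^ 2)⁻¹ * v ((1 + -t) • p)) / t := by
      rw [eq_div_iff (by positivity)]
      linarith
    rw [r1, r2, scalingQuotient]
    ring
  have hphi : legendrePhi v X T p = F2 (0, p) + 2 * F1 (0, p) := by
    simp [hF1, hF2, legendrePhi]
    ring
  have b2 := (hball (hIcc ζ (Set.Ioo_subset_Icc_self hζ)).1 p hp).2.2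
  have b1 := (hball (hIcc ξ (Set.Ioo_subset_Icc_self hξ)).1 p hp).2.1
  rw [hq, hphi]
  rw [abs_lt] at *
  constructor <;> linarith [b1.1, b1.2, b2.1, b2.2]

open Matrix in
/-- The matrix `a (B - A) + b (C - A) + ε` has positive trace against `A⁻¹`, so it cannot be negative
semidefinite. -/
lemma trace_contradiction {n : ℕ} (hn : 0 < n) {A B C : Matrix (Fin n) (Fin n) ℝ}
    (hA : A.PosDef) (hB : B.PosDef) (hC : C.PosDef)
    (hdA : A.det = 1) (hdB : B.det = 1) (hdC : C.det = 1) {a b ε : ℝ}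
    (ha : 0 ≤ a) (hb : 0 ≤ b) (hε : 0 < ε)
    (hM : ∀ e : EuclideanSpace ℝ (Fin n), inner ℝ
      ((toEuclideanCLM (𝕜 := ℝ) (a • (B - A) + b • (C - A) + ε • 1)) e) e ≤ 0) : False := by
  set M := a • (B - A) + b • (C - A) + ε • (1 : Matrix (Fin n) (Fin n) ℝ) with hMdef
  have : Nonempty (Fin n) := ⟨⟨0, hn⟩⟩
  have hMh : M.IsHermitian := by
    have h1 := hA.isHermitian.eq
    have h2 := hB.isHermitian.eq
    have h3 := hC.isHermitian.eq
    simp only [Matrix.IsHermitian, hMdef, Matrix.conjTranspose_add, Matrix.conjTranspose_smul,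
      Matrix.conjTranspose_sub, Matrix.conjTranspose_one, h1, h2, h3, star_trivial]
  have hN : (-M).PosSemidef := by
    refine Matrix.PosSemidef.of_dotProduct_mulVec_nonneg hMh.neg (fun x => ?_)
    have h := hM (WithLp.toLp 2 x)
    rw [toEuclideanCLM_toLp, EuclideanSpace.inner_toLp_toLp] at h
    simp only [Matrix.neg_mulVec, dotProduct_neg, star_trivial] at h ⊢
    linarith
  have h1 := trace_mul_nonneg_of_posSemidef hA.inv.posSemidef hN
  have h2 := card_le_trace_inv_mul hA hB hdA hdB
  have h3 := card_le_trace_inv_mul hA hC hdA hdC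
  have h4 : 0 < (A⁻¹).trace := hA.inv.trace_pos
  have h5 : A⁻¹ * A = 1 := Matrix.nonsing_inv_mul A (by simp [hdA])
  simp only [hMdef, Matrix.mul_neg, Matrix.trace_neg, Matrix.mul_add, Matrix.mul_smul,
    Matrix.mul_sub, h5, Matrix.trace_add, Matrix.trace_smul, Matrix.trace_sub, Matrix.mul_one,
    Matrix.trace_one, Fintype.card_fin, smul_eq_mul] at h1
  nlinarith [mul_nonneg ha (sub_nonneg.mpr h2), mul_nonneg hb (sub_nonneg.mpr h3),
    mul_pos hε h4]

open Matrix in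
/-- The scaling quotient is a subsolution of the linearised equation, and the quadratic term has
Hessian `ε`, so their sum is a strict subsolution and has no local maximum. -/
lemma not_isLocalMax_scalingQuotient {n : ℕ} (hn : 0 < n)
    {v : EuclideanSpace ℝ (Fin n) → ℝ} {X : EuclideanSpace ℝ (Fin n) → EuclideanSpace ℝ (Fin n)}
    {A : EuclideanSpace ℝ (Fin n) → Matrix (Fin n) (Fin n) ℝ}
    {B : Set (EuclideanSpace ℝ (Fin n))} (hB : IsOpen B)
    (hv : ∀ p ∈ B, HasFDerivAt v (innerSL ℝ (X p)) p)
    (hX : ∀ p ∈ B, HasFDerivAt X (toEuclideanCLM (𝕜 := ℝ) (A p)) p)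
    (hpd : ∀ p ∈ B, (A p).PosDef) (hdet : ∀ p ∈ B, (A p).det = 1)
    {t ε : ℝ} (ht : 0 < t) (ht1 : t < 1) (hε : 0 < ε) {p₀ q : EuclideanSpace ℝ (Fin n)}
    (hq : q ∈ B) (hq1 : (1 + t) • q ∈ B) (hq2 : (1 + -t) • q ∈ B) :
    ¬ IsLocalMax (fun p => scalingQuotient v t p + (ε * ‖p‖ ^ 2 - ε / 2 * ‖p - p₀‖ ^ 2)) q := by
  intro hmax
  set a := 1 / t ^ 2 + 1 / t with ha
  set b := 1 / t ^ 2 - 1 / t with hb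
  have ha0 : 0 ≤ a := by positivity
  have hb0 : 0 ≤ b := by
    have : b = (1 - t) / t ^ 2 := by rw [hb]; field_simp
    rw [this]
    exact div_nonneg (by linarith) (by positivity)
  have hl : (1 + t) ≠ 0 := by linarith
  have hm : (1 + -t) ≠ 0 := by linarith
  have hsv : ∀ c : ℝ, c ≠ 0 → ∀ p, c • p ∈ B →
      HasFDerivAt (fun p => (c ^ 2)⁻¹ * v (c • p)) (innerSL ℝ (c⁻¹ • X (c • p))) p := by
    intro c hc p hp
    have h1 : HasFDerivAt (fun p : EuclideanSpace ℝ (Fin n) => c • p)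
        (c • ContinuousLinearMap.id ℝ (EuclideanSpace ℝ (Fin n))) p :=
      (hasFDerivAt_id p).const_smul c
    have h2 := ((hv _ hp).comp p h1).const_mul ((c ^ 2)⁻¹)
    refine h2.congr_fderiv ?_
    ext w
    simp
    field_simp
  have hsX : ∀ c : ℝ, c ≠ 0 → c • q ∈ B →
      HasFDerivAt (fun p => c⁻¹ • X (c • p)) (toEuclideanCLM (𝕜 := ℝ) (A (c • q))) q := by
    intro c hc hp
    have h1 : HasFDerivAt (fun p : EuclideanSpace ℝ (Fin n) => c • p)
        (c • ContinuousLinearMap.id ℝ (EuclideanSpace ℝ (Fin n))) q :=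
      (hasFDerivAt_id q).const_smul c
    refine (((hX _ hp).comp q h1).const_smul c⁻¹).congr_fderiv ?_
    ext1 w
    simp [smul_smul, hc]
  have hsB : ∀ c : ℝ, c • q ∈ B → ∀ᶠ p in nhds q, c • p ∈ B := fun c hc =>
    (continuous_const_smul c).continuousAt.eventually (hB.mem_nhds hc)
  set g : EuclideanSpace ℝ (Fin n) → EuclideanSpace ℝ (Fin n) := fun p =>
    a • ((1 + t)⁻¹ • X ((1 + t) • p) - X p) + b • ((1 + -t)⁻¹ • X ((1 + -t) • p) - X p)
      + ((2 * ε) • p - ε • (p - p₀)) with hg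
  have hgrad : ∀ᶠ p in nhds q, HasFDerivAt
      (fun p => scalingQuotient v t p + (ε * ‖p‖ ^ 2 - ε / 2 * ‖p - p₀‖ ^ 2))
      (innerSL ℝ (g p)) p := by
    filter_upwards [hB.mem_nhds hq, hsB _ hq1, hsB _ hq2] with p h0 h1 h2
    have d0 := hv p h0
    have d1 := ((hsv _ hl p h1).sub d0).const_mul a
    have d2 := ((hsv _ hm p h2).sub d0).const_mul b
    have d3 := (hasFDerivAt_id (𝕜 := ℝ) p).norm_sq.const_mul ε
    have d4 := ((hasFDerivAt_id (𝕜 := ℝ) p).sub_const p₀).norm_sq.const_mul (ε / 2)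
    refine ((d1.add d2).add (d3.sub d4)).congr_fderiv ?_
    ext w
    simp [hg]
    ring
  have hMd : HasFDerivAt g (toEuclideanCLM (𝕜 := ℝ)
      (a • (A ((1 + t) • q) - A q) + b • (A ((1 + -t) • q) - A q) + ε • 1)) q := by
    have d0 := hX q hq
    have d1 := ((hsX _ hl hq1).sub d0).const_smul a
    have d2 := ((hsX _ hm hq2).sub d0).const_smul b
    have d3 := (hasFDerivAt_id (𝕜 := ℝ) q).const_smul (2 * ε)
    have d4 := ((hasFDerivAt_id (𝕜 := ℝ) q).sub_const p₀).const_smul ε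
    refine ((d1.add d2).add (d3.sub d4)).congr_fderiv ?_
    ext1 w
    simp only [map_add, map_sub, map_smul, map_one, _root_.add_apply,
      _root_.sub_apply, _root_.smul_apply,
      ContinuousLinearMap.id_apply, one_apply_eq_self]
    module
  exact trace_contradiction hn (hpd q hq) (hpd _ hq1) (hpd _ hq2) (hdet q hq) (hdet _ hq1)
    (hdet _ hq2) ha0 hb0 hε (fun e => hessian_nonpos_of_isLocalMax hgrad hMd hmax e)

open Matrix in
/-- The local maximum principle in Legendre coordinates. At a local maximum `p₀` of
`φ + ε |p|²`, the subtracted term `(ε / 2) |p - p₀|²` makes the values on a small sphere around `p₀`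
smaller than at the centre by `ε r² / 2`; this survives replacing `φ` by a scaling quotient within
`ε r² / 4`. -/
lemma not_isLocalMax_legendrePhi {n : ℕ} (hn : 0 < n)
    {v : EuclideanSpace ℝ (Fin n) → ℝ} {X : EuclideanSpace ℝ (Fin n) → EuclideanSpace ℝ (Fin n)}
    {A : EuclideanSpace ℝ (Fin n) → Matrix (Fin n) (Fin n) ℝ}
    {B : Set (EuclideanSpace ℝ (Fin n))} (hB : IsOpen B)
    (hv : ∀ p ∈ B, HasFDerivAt v (innerSL ℝ (X p)) p)
    (hX : ∀ p ∈ B, HasFDerivAt X (toEuclideanCLM (𝕜 := ℝ) (A p)) p)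
    (hA : ContinuousOn A B)
    (hpd : ∀ p ∈ B, (A p).PosDef) (hdet : ∀ p ∈ B, (A p).det = 1)
    {ε : ℝ} (hε : 0 < ε) {p₀ : EuclideanSpace ℝ (Fin n)} (hp₀ : p₀ ∈ B) :
    ¬ IsLocalMax (fun p => legendrePhi v X (fun p => toEuclideanCLM (𝕜 := ℝ) (A p)) p
      + ε * ‖p‖ ^ 2) p₀ := by
  intro hmax
  have hT : ContinuousOn (fun p => toEuclideanCLM (𝕜 := ℝ) (A p)) B := by
    have hc : Continuous fun M : Matrix (Fin n) (Fin n) ℝ => toEuclideanCLM (𝕜 := ℝ) M :=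
      LinearMap.continuous_of_finiteDimensional
        (toEuclideanCLM (𝕜 := ℝ) (n := Fin n)).toAlgEquiv.toLinearMap
    exact hc.comp_continuousOn hA
  set Φ := legendrePhi v X (fun p => toEuclideanCLM (𝕜 := ℝ) (A p)) with hΦ
  obtain ⟨r, hr, hball⟩ := Metric.nhds_basis_closedBall.mem_iff.mp
    (Filter.inter_mem (hB.mem_nhds hp₀) hmax)
  set K := Metric.closedBall p₀ r with hKdef
  have hK : IsCompact K := isCompact_closedBall p₀ r
  have hKB : K ⊆ B := fun p hp => (hball hp).1
  have hδ : 0 < ε * r ^ 2 / 4 := by positivity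
  have ev1 := scalingQuotient_uniform hB hK hKB hv hX hT hδ
  have ev2 : ∀ᶠ s in nhds (0 : ℝ), ∀ p ∈ K, (1 + s) • p ∈ B := by
    refine hK.eventually_forall_of_forall_eventually (fun p hp => ?_)
    have hsc : ContinuousAt (fun z : ℝ × EuclideanSpace ℝ (Fin n) => (1 + z.1) • z.2) (0, p) := by
      fun_prop
    exact hsc.eventually (by simpa using hB.mem_nhds (hKB hp))
  have ev3 : ∀ᶠ s in nhds (0 : ℝ), ∀ p ∈ K, (1 + -s) • p ∈ B :=
    (by simpa using (continuous_neg (G := ℝ)).tendsto 0 :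
      Filter.Tendsto (fun s : ℝ => -s) (nhds 0) (nhds 0)).eventually ev2
  obtain ⟨t, ⟨⟨⟨h1, h2⟩, h3⟩, h4⟩, ht0⟩ := (((ev1.and (nhdsWithin_le_nhds ev2)).and
    (nhdsWithin_le_nhds ev3)).and (nhdsWithin_le_nhds
      (eventually_lt_nhds (zero_lt_one (α := ℝ))))).and self_mem_nhdsWithin |>.exists
  set h : EuclideanSpace ℝ (Fin n) → ℝ := fun p =>
    scalingQuotient v t p + (ε * ‖p‖ ^ 2 - ε / 2 * ‖p - p₀‖ ^ 2) with hh
  have hcont : ContinuousOn h K := by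
    have hvc : ContinuousOn v B := fun p hp => (hv p hp).continuousAt.continuousWithinAt
    have c0 : ContinuousOn v K := hvc.mono hKB
    have c1 : ContinuousOn (fun p => v ((1 + t) • p)) K :=
      hvc.comp (by fun_prop) (fun p hp => h2 p hp)
    have c2 : ContinuousOn (fun p => v ((1 + -t) • p)) K :=
      hvc.comp (by fun_prop) (fun p hp => h3 p hp)
    have c3 : ContinuousOn (fun p => ε * ‖p‖ ^ 2 - ε / 2 * ‖p - p₀‖ ^ 2) K := by fun_prop
    exact ((continuousOn_const.mul ((continuousOn_const.mul c1).sub c0)).add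
      (continuousOn_const.mul ((continuousOn_const.mul c2).sub c0))).add c3
  have hp₀K : p₀ ∈ K := Metric.mem_closedBall_self hr.le
  obtain ⟨q, hqK, hqmax⟩ := hK.exists_isMaxOn ⟨p₀, hp₀K⟩ hcont
  by_cases hqi : dist q p₀ < r
  · refine not_isLocalMax_scalingQuotient hn hB hv hX hpd hdet ht0 h4 hε (p₀ := p₀)
      (hKB hqK) (h2 q hqK) (h3 q hqK) (hqmax.isLocalMax ?_)
    exact Filter.mem_of_superset (Metric.isOpen_ball.mem_nhds hqi) Metric.ball_subset_closedBall
  · have hqr : ‖q - p₀‖ = r := by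
      rw [← dist_eq_norm]
      exact le_antisymm hqK (not_lt.mp hqi)
    have e1 : h p₀ ≤ h q := hqmax hp₀K
    have e2 := (abs_lt.mp (h1 q hqK)).2
    have e3 := (abs_lt.mp (h1 p₀ hp₀K)).1
    have e4 : Φ q + ε * ‖q‖ ^ 2 ≤ Φ p₀ + ε * ‖p₀‖ ^ 2 := (hball hqK).2
    simp only [hh, hqr, sub_self, norm_zero] at e1
    nlinarith

/-! ### Transfer to the original variables -/

/-- The gradient of `u` as a vector of partial derivatives. -/
noncomputable def gradFn {n : ℕ} (u : EuclideanSpace ℝ (Fin n) → ℝ)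
    (x : EuclideanSpace ℝ (Fin n)) : EuclideanSpace ℝ (Fin n) :=
  WithLp.toLp 2 fun i => pd i u x

lemma contDiffOn_pd {n : ℕ} {U : Set (EuclideanSpace ℝ (Fin n))} (hU : IsOpen U)
    {f : EuclideanSpace ℝ (Fin n) → ℝ} {m k : WithTop ℕ∞} (hf : ContDiffOn ℝ k f U)
    (hmk : m + 1 ≤ k) (i : Fin n) : ContDiffOn ℝ m (pd i f) U :=
  (hf.fderiv_of_isOpen hU hmk).clm_apply contDiffOn_const

lemma fderiv_apply_eq_sum_pd {n : ℕ} (f : EuclideanSpace ℝ (Fin n) → ℝ)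
    (x w : EuclideanSpace ℝ (Fin n)) : fderiv ℝ f x w = ∑ i, w i * pd i f x := by
  conv_lhs => rw [← (EuclideanSpace.basisFun (Fin n) ℝ).sum_repr w]
  simp [pd]

lemma hasFDerivAt_innerSL_gradFn {n : ℕ} {u : EuclideanSpace ℝ (Fin n) → ℝ}
    {x : EuclideanSpace ℝ (Fin n)} (hu : DifferentiableAt ℝ u x) :
    HasFDerivAt u (innerSL ℝ (gradFn u x)) x := by
  refine hu.hasFDerivAt.congr_fderiv ?_
  ext w
  rw [fderiv_apply_eq_sum_pd]
  simp [gradFn, PiLp.inner_apply]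

open Matrix in
/-- The symmetry of the Hessian enters because row `i` of `hess u x` holds the `i`-th derivatives of
the components of the gradient, so the Jacobian matrix is the transpose. -/
lemma hasFDerivAt_gradFn {n : ℕ} {u : EuclideanSpace ℝ (Fin n) → ℝ}
    {x : EuclideanSpace ℝ (Fin n)} (hu : ∀ i, DifferentiableAt ℝ (pd i u) x)
    (hs : (hess u x).IsHermitian) :
    HasFDerivAt (gradFn u) (toEuclideanCLM (𝕜 := ℝ) (hess u x)) x := by
  rw [← hasFDerivWithinAt_univ, hasFDerivWithinAt_euclidean]
  intro i
  rw [hasFDerivWithinAt_univ]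
  refine (hu i).hasFDerivAt.congr_fderiv ?_
  ext w
  rw [fderiv_apply_eq_sum_pd]
  simp only [ContinuousLinearMap.comp_apply, PiLp.proj_apply, ofLp_toEuclideanCLM, mulVec,
    dotProduct]
  refine Finset.sum_congr rfl fun j _ => ?_
  have h := hs.apply j i
  rw [star_trivial] at h
  rw [h, mul_comm]
  rfl

lemma phiFn_eq_inner {n : ℕ} (u : EuclideanSpace ℝ (Fin n) → ℝ) (x : EuclideanSpace ℝ (Fin n)) :
    phiFn u x = inner ℝ (Matrix.toEuclideanCLM (𝕜 := ℝ) (hess u x)⁻¹ (gradFn u x)) (gradFn u x)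
      - 2 * u x := by
  simp only [phiFn, gradFn, Matrix.toEuclideanCLM_toLp, EuclideanSpace.inner_toLp_toLp,
    star_trivial, dotProduct, Matrix.mulVec, Finset.mul_sum]
  congr 1
  refine Finset.sum_congr rfl fun k _ => Finset.sum_congr rfl fun l _ => ?_
  ring

open Matrix in
lemma exists_equiv_of_det_eq_one {n : ℕ} {H : Matrix (Fin n) (Fin n) ℝ} (hH : H.det = 1) :
    ∃ L : EuclideanSpace ℝ (Fin n) ≃L[ℝ] EuclideanSpace ℝ (Fin n),
      (L : EuclideanSpace ℝ (Fin n) →L[ℝ] EuclideanSpace ℝ (Fin n))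
        = toEuclideanCLM (𝕜 := ℝ) H ∧
      (L.symm : EuclideanSpace ℝ (Fin n) →L[ℝ] EuclideanSpace ℝ (Fin n))
        = toEuclideanCLM (𝕜 := ℝ) H⁻¹ := by
  have hu : IsUnit H.det := by simp [hH]
  refine ⟨ContinuousLinearEquiv.equivOfInverse (toEuclideanCLM (𝕜 := ℝ) H)
    (toEuclideanCLM (𝕜 := ℝ) H⁻¹) (fun x => ?_) (fun x => ?_), by ext1; rfl, by ext1; rfl⟩
  · rw [← mul_apply_eq_comp, ← map_mul, Matrix.nonsing_inv_mul _ hu, map_one]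
    rfl
  · rw [← mul_apply_eq_comp, ← map_mul, Matrix.mul_nonsing_inv _ hu, map_one]
    rfl

lemma inv_eq_adjugate_of_det_eq_one {n : ℕ} {H : Matrix (Fin n) (Fin n) ℝ} (hH : H.det = 1) :
    H⁻¹ = H.adjugate := by
  rw [Matrix.inv_def, hH]
  simp

lemma continuousOn_hess {n : ℕ} {U : Set (EuclideanSpace ℝ (Fin n))} (hU : IsOpen U)
    {u : EuclideanSpace ℝ (Fin n) → ℝ} (hu : ContDiffOn ℝ 3 u U) :
    ContinuousOn (hess u) U := by
  refine continuousOn_pi.mpr fun i => continuousOn_pi.mpr fun j => ?_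
  have h2 : ContDiffOn ℝ 2 (pd j u) U := contDiffOn_pd hU hu (by norm_num) j
  exact (contDiffOn_pd (m := 1) hU h2 (by norm_num) i).continuousOn

lemma continuousOn_inv_of_det_eq_one {Y : Type*} [TopologicalSpace Y] {n : ℕ}
    {H : Y → Matrix (Fin n) (Fin n) ℝ} {S : Set Y}
    (hH : ContinuousOn H S) (hdet : ∀ y ∈ S, (H y).det = 1) :
    ContinuousOn (fun y => (H y)⁻¹) S := by
  have hc : Continuous fun M : Matrix (Fin n) (Fin n) ℝ => M.adjugate :=
    continuous_id.matrix_adjugate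
  exact (hc.comp_continuousOn hH).congr fun y hy => inv_eq_adjugate_of_det_eq_one (hdet y hy)

open Matrix in
/-- The interior maximum principle in the original variables: the inverse function theorem supplies
the local inverse of the gradient map, and with it the Legendre transform `v`. -/
lemma not_isLocalMax_phiFn {n : ℕ} (hn : 0 < n) {Ω U : Set (EuclideanSpace ℝ (Fin n))}
    (hΩo : IsOpen Ω) (hUo : IsOpen U) (hΩU : Ω ⊆ U)
    {u : EuclideanSpace ℝ (Fin n) → ℝ} (hu : ContDiffOn ℝ 3 u U)
    (hpos : ∀ x ∈ Ω, (hess u x).PosDef) (hMA : ∀ x ∈ Ω, (hess u x).det = 1)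
    {ε : ℝ} (hε : 0 < ε) {x₀ : EuclideanSpace ℝ (Fin n)} (hx₀ : x₀ ∈ Ω) :
    ¬ IsLocalMax (fun x => phiFn u x + ε * ‖gradFn u x‖ ^ 2) x₀ := by
  intro hmax
  have hpd : ∀ i, ContDiffOn ℝ 2 (pd i u) U := fun i => contDiffOn_pd hUo hu (by norm_num) i
  have hFd : ∀ x ∈ Ω, HasFDerivAt (gradFn u) (toEuclideanCLM (𝕜 := ℝ) (hess u x)) x :=
    fun x hx => hasFDerivAt_gradFn
      (fun i => ((hpd i).contDiffAt (hUo.mem_nhds (hΩU hx))).differentiableAt (by norm_num))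
      (hpos x hx).isHermitian
  have hFc : ContDiffAt ℝ 2 (gradFn u) x₀ :=
    contDiffAt_euclidean.mpr fun i => (hpd i).contDiffAt (hUo.mem_nhds (hΩU hx₀))
  obtain ⟨L₀, hL₀, -⟩ := exists_equiv_of_det_eq_one (hMA x₀ hx₀)
  have hF₀ : HasFDerivAt (gradFn u)
      (L₀ : EuclideanSpace ℝ (Fin n) →L[ℝ] EuclideanSpace ℝ (Fin n)) x₀ := by
    rw [hL₀]; exact hFd x₀ hx₀
  set e := hFc.toOpenPartialHomeomorph (gradFn u) hF₀ (by norm_num) with he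
  have hecoe : ∀ x, e x = gradFn u x := fun x => rfl
  have hx₀e : x₀ ∈ e.source := hFc.mem_toOpenPartialHomeomorph_source hF₀ (by norm_num)
  set B := e.target ∩ e.symm ⁻¹' Ω with hBdef
  have hB : IsOpen B := e.symm.isOpen_inter_preimage hΩo
  have hright : ∀ p ∈ B, gradFn u (e.symm p) = p := fun p hp => e.right_inv hp.1
  have hX : ∀ p ∈ B, HasFDerivAt e.symm
      (toEuclideanCLM (𝕜 := ℝ) (hess u (e.symm p))⁻¹) p := by
    intro p hp
    obtain ⟨L, hL, hL'⟩ := exists_equiv_of_det_eq_one (hMA _ hp.2)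
    rw [← hL']
    refine e.hasFDerivAt_symm hp.1 ?_
    rw [hL]
    exact hFd _ hp.2
  have hXc : ContinuousOn e.symm B := fun p hp => (hX p hp).continuousAt.continuousWithinAt
  set v : EuclideanSpace ℝ (Fin n) → ℝ := fun p => inner ℝ (e.symm p) p - u (e.symm p) with hvdef
  have hv : ∀ p ∈ B, HasFDerivAt v (innerSL ℝ (e.symm p)) p := by
    intro p hp
    have hud : HasFDerivAt u (innerSL ℝ p) (e.symm p) := by
      have := hasFDerivAt_innerSL_gradFn
        ((hu.contDiffAt (hUo.mem_nhds (hΩU hp.2))).differentiableAt (by norm_num))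
      rwa [hright p hp] at this
    have h1 := (hX p hp).inner ℝ (hasFDerivAt_id p)
    have h2 := hud.comp p (hX p hp)
    refine (h1.sub h2).congr_fderiv ?_
    ext w
    simp [fderivInnerCLM_apply, real_inner_comm]
  have hdetinv : ∀ p ∈ B, ((hess u (e.symm p))⁻¹).det = 1 := fun p hp => by
    rw [Matrix.det_nonsing_inv, hMA _ hp.2]
    simp
  have hp₀ : gradFn u x₀ ∈ B := by
    refine ⟨e.map_source hx₀e, ?_⟩
    have : e.symm (gradFn u x₀) = x₀ := e.left_inv hx₀e
    simpa [this] using hx₀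
  have hsymm₀ : e.symm (gradFn u x₀) = x₀ := e.left_inv hx₀e
  have hA : ContinuousOn (fun p => (hess u (e.symm p))⁻¹) B :=
    continuousOn_inv_of_det_eq_one
      ((continuousOn_hess hUo hu).comp hXc fun p hp => hΩU hp.2) fun p hp => hMA _ hp.2
  refine not_isLocalMax_legendrePhi hn hB hv hX hA (fun p hp => (hpos _ hp.2).inv) hdetinv hε
    hp₀ ?_
  have hphi : ∀ p ∈ B, legendrePhi v e.symm
      (fun p => toEuclideanCLM (𝕜 := ℝ) (hess u (e.symm p))⁻¹) p + ε * ‖p‖ ^ 2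
      = phiFn u (e.symm p) + ε * ‖gradFn u (e.symm p)‖ ^ 2 := by
    intro p hp
    rw [phiFn_eq_inner, hright p hp, legendrePhi, hvdef]
    ring
  have htend : Filter.Tendsto e.symm (nhds (gradFn u x₀)) (nhds x₀) := by
    have := (hX _ hp₀).continuousAt.tendsto
    rwa [hsymm₀] at this
  filter_upwards [htend.eventually hmax, hB.mem_nhds hp₀] with p h1 h2
  rw [hphi p h2, hphi _ hp₀, hsymm₀]
  exact h1

/-- Theorem 1.1: for a strictly convex solution of `det D²u = 1`, `u = 0` on `∂Ω`,
the function `φ = Σ u^{kl} u_k u_l − 2u` attains its maximum on the boundary. -/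
theorem max_principle_phi {n : ℕ} (hn : 2 ≤ n)
    (Ω U : Set (EuclideanSpace ℝ (Fin n)))
    (hΩo : IsOpen Ω) (hΩc : Convex ℝ Ω) (hΩb : Bornology.IsBounded Ω)
    (hUo : IsOpen U) (hUcl : closure Ω ⊆ U)
    (u : EuclideanSpace ℝ (Fin n) → ℝ)
    (hu : ContDiffOn ℝ 3 u U)
    (hpos : ∀ x ∈ Ω, (hess u x).PosDef)
    (hMA : ∀ x ∈ Ω, (hess u x).det = 1)
    (hbd : ∀ x ∈ frontier Ω, u x = 0) :
    ∀ x ∈ Ω, phiFn u x ≤ sSup (phiFn u '' frontier Ω) := by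
  have hH : ContinuousOn (hess u) (closure Ω) := (continuousOn_hess hUo hu).mono hUcl
  have hK : IsCompact (closure Ω) := hΩb.isCompact_closure
  have hdetc : ContinuousOn (fun x => (hess u x).det) (closure Ω) :=
    (continuous_id.matrix_det (R := ℝ) (n := Fin n)).comp_continuousOn hH
  -- By continuity the equation, hence invertibility of the Hessian, persists on the frontier.
  have hdet : ∀ x ∈ closure Ω, (hess u x).det = 1 := by
    have h : Set.EqOn (fun x => (hess u x).det) (fun _ => 1) Ω := hMA
    exact h.of_subset_closure hdetc continuousOn_const subset_closure le_rfl
  have hinv := continuousOn_inv_of_det_eq_one hH hdet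
  have hpdc : ∀ i, ContinuousOn (pd i u) (closure Ω) := fun i =>
    (contDiffOn_pd (m := 2) hUo hu (by norm_num) i).continuousOn.mono hUcl
  have hphic : ContinuousOn (phiFn u) (closure Ω) := by
    refine ContinuousOn.sub ?_ (continuousOn_const.mul (hu.continuousOn.mono hUcl))
    refine continuousOn_finsetSum _ fun k _ => continuousOn_finsetSum _ fun l _ => ?_
    exact ((continuousOn_pi.mp (continuousOn_pi.mp hinv k) l).mul (hpdc k)).mul (hpdc l)
  have hgc : ContinuousOn (fun x => ‖gradFn u x‖ ^ 2) (closure Ω) :=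
    ((PiLp.continuous_toLp 2 _).comp_continuousOn (continuousOn_pi.mpr hpdc)).norm.pow 2
  obtain ⟨C, hC⟩ := (hK.image_of_continuousOn hgc).bddAbove
  have hfc : frontier Ω ⊆ closure Ω := frontier_subset_closure
  have hbdd : BddAbove (phiFn u '' frontier Ω) :=
    (hK.image_of_continuousOn hphic).bddAbove.mono (Set.image_mono hfc)
  intro x hx
  have key : ∀ ε : ℝ, 0 < ε → phiFn u x ≤ sSup (phiFn u '' frontier Ω) + ε * C := by
    intro ε hε
    obtain ⟨y, hy, hymax⟩ := hK.exists_isMaxOn ⟨x, subset_closure hx⟩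
      (hphic.add (continuousOn_const.mul hgc) :
        ContinuousOn (fun x => phiFn u x + ε * ‖gradFn u x‖ ^ 2) (closure Ω))
    have hyΩ : y ∉ Ω := fun hyΩ =>
      not_isLocalMax_phiFn (by omega) hΩo hUo (subset_closure.trans hUcl) hu hpos hMA hε hyΩ
        (hymax.isLocalMax (Filter.mem_of_superset (hΩo.mem_nhds hyΩ) subset_closure))
    have hyf : y ∈ frontier Ω := by
      rw [hΩo.frontier_eq]
      exact ⟨hy, hyΩ⟩
    have h1 : phiFn u x + ε * ‖gradFn u x‖ ^ 2 ≤ phiFn u y + ε * ‖gradFn u y‖ ^ 2 :=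
      hymax (subset_closure hx)
    have h2 : phiFn u y ≤ sSup (phiFn u '' frontier Ω) := le_csSup hbdd ⟨y, hyf, rfl⟩
    have h3 : ‖gradFn u y‖ ^ 2 ≤ C := hC ⟨y, hy, rfl⟩
    have h4 : 0 ≤ ε * ‖gradFn u x‖ ^ 2 := by positivity
    have h5 := mul_le_mul_of_nonneg_left h3 hε.le
    linarith
  have hlim : Filter.Tendsto (fun ε : ℝ => sSup (phiFn u '' frontier Ω) + ε * C)
      (nhdsWithin 0 (Set.Ioi 0)) (nhds (sSup (phiFn u '' frontier Ω))) := by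
    have hc : Continuous fun ε : ℝ => sSup (phiFn u '' frontier Ω) + ε * C := by fun_prop
    have := hc.tendsto 0
    simp only [zero_mul, add_zero] at this
    exact this.mono_left nhdsWithin_le_nhds
  exact ge_of_tendsto hlim (Filter.eventually_of_mem self_mem_nhdsWithin key)
end

section
/- Let Ω ⊂ ℝⁿ (n ≥ 2) be an open set and let u : Ω → ℝ be a C⁴ function whose Hessian D²u is positive definite and which satisfies det D²u = 1 in Ω. Define φ = Σ_{k,l=1}^n u^{kl} u_k u_l − 2u and, for each i,j, T_{ij} = Σ_{k,l=1}^n u_{ijk} u^{kl} u_l, where u_{ijk} denotes third partial derivatives of u. Then at every point of Ω one has the sum-of-squares identity Σ_{i,j=1}^n u^{ij} φ_{ij} = Σ_{i,j,p,q=1}^n u^{ip} u^{jq} T_{ij} T_{pq}. -/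
/-!
Write `v = (D²u)⁻¹∇u`, so that `D²u v = ∇u` and `φ = v · ∇u - 2u`. Differentiating `D²u v = ∇u` gives
`Dv = 1 - T (D²u)⁻¹`, where `T_{ij} = u_{ijk} v^k`, and hence the short formula
`φ_j = -u_{jkm} v^k v^m`. One more derivative yields
`D²φ = -u_{ijkm} v^k v^m - 2 T + 2 T (D²u)⁻¹ T`.

Now contract with `G = (D²u)⁻¹`. By Jacobi's formula (`pd_det`) the equation `det D²u = 1` gives
`tr(G ∂ₖD²u) = 0`, so `tr(G T) = 0`; differentiating again with `∂G = -G ∂(D²u) G` gives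
`tr(G ∂ₖ∂ₗD²u) = tr(G ∂ₖD²u G ∂ₗD²u)`, so the fourth-order term contributes `-tr(G T G T)`. In total
`tr(G D²φ) = tr(G T G T)`, which is `contraction_identity`.
-/

open scoped BigOperators

/-- `T_{ij} = Σ_{k,l} u_{ijk} u^{kl} u_l`. -/
noncomputable def Tfn {n : ℕ} (u : EuclideanSpace ℝ (Fin n) → ℝ)
    (x : EuclideanSpace ℝ (Fin n)) (i j : Fin n) : ℝ :=
  ∑ k, ∑ l, pd i (pd j (pd k u)) x * (hess u x)⁻¹ k l * pd l u x

/-! ### Calculus of the coordinate derivatives `pd` -/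

section

variable {n : ℕ}

lemma pd_contDiffOn {Ω : Set (EuclideanSpace ℝ (Fin n))} (hΩ : IsOpen Ω)
    {f : EuclideanSpace ℝ (Fin n) → ℝ} {m k : WithTop ℕ∞} (hf : ContDiffOn ℝ k f Ω)
    (hk : m + 1 ≤ k) (i : Fin n) : ContDiffOn ℝ m (pd i f) Ω :=
  (hf.fderiv_of_isOpen hΩ hk).clm_apply contDiffOn_const

lemma pd_congr {Ω : Set (EuclideanSpace ℝ (Fin n))} (hΩ : IsOpen Ω)
    {f g : EuclideanSpace ℝ (Fin n) → ℝ} (h : ∀ y ∈ Ω, f y = g y)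
    {x : EuclideanSpace ℝ (Fin n)} (hx : x ∈ Ω) (i : Fin n) : pd i f x = pd i g x := by
  have : f =ᶠ[nhds x] g := Filter.eventuallyEq_of_mem (hΩ.mem_nhds hx) h
  simp only [pd, this.fderiv_eq]

lemma pd_comm {Ω : Set (EuclideanSpace ℝ (Fin n))} (hΩ : IsOpen Ω)
    {f : EuclideanSpace ℝ (Fin n) → ℝ} {k : WithTop ℕ∞} (hf : ContDiffOn ℝ k f Ω) (hk : 2 ≤ k)
    {x : EuclideanSpace ℝ (Fin n)} (hx : x ∈ Ω) (i j : Fin n) :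
    pd i (pd j f) x = pd j (pd i f) x := by
  have hfx : ContDiffAt ℝ k f x := hf.contDiffAt (hΩ.mem_nhds hx)
  have hd : DifferentiableAt ℝ (fderiv ℝ f) x :=
    ((hfx.of_le hk).fderiv_right (m := 1) (by norm_num)).differentiableAt (by norm_num)
  have key : ∀ a b : Fin n, pd a (pd b f) x =
      fderiv ℝ (fderiv ℝ f) x (EuclideanSpace.single a 1) (EuclideanSpace.single b 1) := by
    intro a b
    unfold pd
    rw [fderiv_clm_apply hd (differentiableAt_const _)]
    simp
  rw [key, key]
  exact (hfx.isSymmSndFDerivAt (by simpa using hk)).eq _ _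

lemma pd_mul {f g : EuclideanSpace ℝ (Fin n) → ℝ} {x : EuclideanSpace ℝ (Fin n)}
    (hf : DifferentiableAt ℝ f x) (hg : DifferentiableAt ℝ g x) (i : Fin n) :
    pd i (fun y => f y * g y) x = pd i f x * g x + f x * pd i g x := by
  simp only [pd, fderiv_fun_mul hf hg]
  simp; ring

lemma pd_sub {f g : EuclideanSpace ℝ (Fin n) → ℝ} {x : EuclideanSpace ℝ (Fin n)}
    (hf : DifferentiableAt ℝ f x) (hg : DifferentiableAt ℝ g x) (i : Fin n) :
    pd i (fun y => f y - g y) x = pd i f x - pd i g x := by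
  simp [pd, fderiv_fun_sub hf hg]

lemma pd_neg (f : EuclideanSpace ℝ (Fin n) → ℝ) (x : EuclideanSpace ℝ (Fin n)) (i : Fin n) :
    pd i (fun y => -f y) x = -pd i f x := by
  simp [pd, fderiv_fun_neg]

lemma pd_const (c : ℝ) (x : EuclideanSpace ℝ (Fin n)) (i : Fin n) :
    pd i (fun _ => c) x = 0 := by
  simp [pd]

lemma pd_sum {ι : Type*} [Fintype ι] {f : ι → EuclideanSpace ℝ (Fin n) → ℝ}
    {x : EuclideanSpace ℝ (Fin n)} (hf : ∀ a, DifferentiableAt ℝ (f a) x) (i : Fin n) :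
    pd i (fun y => ∑ a, f a y) x = ∑ a, pd i (f a) x := by
  simp only [pd]
  rw [fderiv_fun_sum (fun a _ => hf a)]
  simp

/-- Jacobi's formula `∂ₖ det M = tr (adj M · ∂ₖM)`, from the Leibniz expansion: expanding along
columns, both sides are the sum over `a` of the determinants of `M` with column `a` differentiated. -/
lemma pd_det {M : EuclideanSpace ℝ (Fin n) → Matrix (Fin n) (Fin n) ℝ}
    {x : EuclideanSpace ℝ (Fin n)} (hM : ∀ a b, DifferentiableAt ℝ (fun y => M y a b) x)
    (k : Fin n) :
    pd k (fun y => (M y).det) x =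
      ∑ a, ∑ b, (M x).adjugate a b * pd k (fun y => M y b a) x := by
  have h1 : ∀ a, ∑ b, (M x).adjugate a b * pd k (fun y => M y b a) x =
      ((M x).updateCol a (fun b => pd k (fun y => M y b a) x)).det := by
    intro a
    rw [← Matrix.cramer_apply, Matrix.cramer_eq_adjugate_mulVec]
    rfl
  simp only [h1, Matrix.det_apply']
  rw [Finset.sum_comm]
  have hp : ∀ σ : Equiv.Perm (Fin n), HasFDerivAt (fun y => ∏ i, M y (σ i) i)
      (∑ i, (∏ j ∈ Finset.univ.erase i, M x (σ j) j) • fderiv ℝ (fun y => M y (σ i) i) x) x :=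
    fun σ => HasFDerivAt.finsetProd fun i _ => (hM (σ i) i).hasFDerivAt
  rw [pd_sum (fun σ => ((hp σ).differentiableAt.const_mul _))]
  refine Finset.sum_congr rfl fun σ _ => ?_
  rw [pd_mul (differentiableAt_const _) (hp σ).differentiableAt, pd_const, zero_mul, zero_add,
    ← Finset.mul_sum]
  congr 1
  conv_lhs => rw [pd, (hp σ).fderiv]
  simp only [FunLike.coe_sum, Finset.sum_apply, FunLike.coe_smul, Pi.smul_apply, smul_eq_mul]
  refine Finset.sum_congr rfl fun a _ => ?_
  rw [← Finset.prod_erase_mul _ _ (Finset.mem_univ a)]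
  congr 1
  · refine Finset.prod_congr rfl fun j hj => ?_
    rw [Matrix.updateCol_ne (Finset.ne_of_mem_erase hj)]
  · simp [pd]

lemma contDiffOn_det {Ω : Set (EuclideanSpace ℝ (Fin n))} {k : WithTop ℕ∞}
    {M : EuclideanSpace ℝ (Fin n) → Matrix (Fin n) (Fin n) ℝ}
    (hM : ∀ a b, ContDiffOn ℝ k (fun y => M y a b) Ω) :
    ContDiffOn ℝ k (fun y => (M y).det) Ω := by
  simp only [Matrix.det_apply']
  exact ContDiffOn.sum fun σ _ => contDiffOn_const.mul (contDiffOn_prod fun i _ => hM _ _)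

lemma contDiffOn_adjugate {Ω : Set (EuclideanSpace ℝ (Fin n))} {k : WithTop ℕ∞}
    {M : EuclideanSpace ℝ (Fin n) → Matrix (Fin n) (Fin n) ℝ}
    (hM : ∀ a b, ContDiffOn ℝ k (fun y => M y a b) Ω) (i j : Fin n) :
    ContDiffOn ℝ k (fun y => (M y).adjugate i j) Ω := by
  simp only [Matrix.adjugate_apply]
  refine contDiffOn_det fun a b => ?_
  by_cases h : a = j
  · subst h; simp only [Matrix.updateRow_self]; exact contDiffOn_const
  · simp only [Matrix.updateRow_ne h]; exact hM a b

/-! ### Pointwise linear algebra -/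

/-- The trace computation at a single point. Here `G` stands for the inverse Hessian, `A k` for
`∂ₖ D²u`, `B k l` for `∂ₖ∂ₗ D²u`, `v` for `(D²u)⁻¹∇u`, `W` for its Jacobian and `P` for `D²φ`; `h1`
and `h2` are the once and twice differentiated Monge–Ampère equation. The `B`-term contributes
`-tr(GTGT)` by `h2`, the `W`-term contributes `-2 tr(GT) + 2 tr(GTGT)`, and `tr(GT) = 0` by `h1`. -/
lemma contraction_identity {G T W P : Matrix (Fin n) (Fin n) ℝ}
    {A : Fin n → Matrix (Fin n) (Fin n) ℝ} {B : Fin n → Fin n → Matrix (Fin n) (Fin n) ℝ}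
    {v : Fin n → ℝ} (hG : G.transpose = G) (hTs : T.transpose = T)
    (hT : T = ∑ k, v k • A k) (hW : W = 1 - T * G)
    (hP : P = -(∑ k, ∑ l, (v k * v l) • B k l) - (2 : ℝ) • (W * T))
    (h1 : ∀ k, (G * A k).trace = 0)
    (h2 : ∀ k l, (G * B k l).trace = (G * A k * G * A l).trace) :
    ∑ i, ∑ j, G i j * P i j = ∑ i, ∑ j, ∑ p, ∑ q, G i p * G j q * T i j * T p q := by
  have hGe : ∀ a b, G a b = G b a := fun a b => congrFun (congrFun hG b) a
  have hTe : ∀ a b, T a b = T b a := fun a b => congrFun (congrFun hTs b) a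
  have hL : ∑ i, ∑ j, G i j * P i j = (G * P).trace := by
    simp only [Matrix.trace, Matrix.diag, Matrix.mul_apply]
    rw [Finset.sum_comm]
    exact Finset.sum_congr rfl fun i _ => Finset.sum_congr rfl fun j _ => by rw [hGe]
  have hR : ∑ i, ∑ j, ∑ p, ∑ q, G i p * G j q * T i j * T p q = (G * T * G * T).trace := by
    simp only [Matrix.trace, Matrix.diag, Matrix.mul_apply, Finset.sum_mul]
    refine Finset.sum_congr rfl fun i _ => Finset.sum_congr rfl fun j _ => ?_
    rw [Finset.sum_comm]
    refine Finset.sum_congr rfl fun q _ => Finset.sum_congr rfl fun p _ => ?_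
    rw [hGe j q, hTe i j]; ring
  have hGT : (G * T).trace = 0 := by
    rw [hT, Finset.mul_sum, Matrix.trace_sum]
    exact Finset.sum_eq_zero fun k _ => by rw [Matrix.mul_smul, Matrix.trace_smul, h1, smul_zero]
  have hB : (G * ∑ k, ∑ l, (v k * v l) • B k l).trace = (G * T * G * T).trace := by
    rw [hT]
    simp only [Finset.mul_sum, Finset.sum_mul, Matrix.trace_sum, Matrix.mul_smul, Matrix.smul_mul,
      Matrix.trace_smul, h2, smul_smul]
    rw [Finset.sum_comm]
    exact Finset.sum_congr rfl fun k _ => Finset.sum_congr rfl fun l _ => by rw [mul_comm]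
  have hGP : (G * P).trace = -(G * T * G * T).trace
      - 2 * ((G * T).trace - (G * T * G * T).trace) := by
    rw [hP, hW, Matrix.mul_sub, Matrix.mul_neg, Matrix.trace_sub, Matrix.trace_neg, hB,
      Matrix.mul_smul, Matrix.trace_smul, Matrix.sub_mul, Matrix.mul_sub, Matrix.trace_sub,
      Matrix.one_mul, smul_eq_mul]
    simp only [Matrix.mul_assoc]
  rw [hL, hR, hGP, hGT]; ring

end

/-! ### The identity -/

/-- Sum-of-squares identity: `Σ u^{ij} φ_{ij} = Σ u^{ip} u^{jq} T_{ij} T_{pq}`. -/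
theorem sum_of_squares_identity_phi {n : ℕ} (hn : 2 ≤ n)
    (Ω : Set (EuclideanSpace ℝ (Fin n))) (hΩo : IsOpen Ω)
    (u : EuclideanSpace ℝ (Fin n) → ℝ)
    (hu : ContDiffOn ℝ 4 u Ω)
    (hpos : ∀ x ∈ Ω, (hess u x).PosDef)
    (hMA : ∀ x ∈ Ω, (hess u x).det = 1) :
    ∀ x ∈ Ω,
      ∑ i, ∑ j, (hess u x)⁻¹ i j * pd i (pd j (phiFn u)) x =
        ∑ i, ∑ j, ∑ p, ∑ q,
          (hess u x)⁻¹ i p * (hess u x)⁻¹ j q * Tfn u x i j * Tfn u x p q := by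
  have hc1 : ∀ i, ContDiffOn ℝ 3 (pd i u) Ω := pd_contDiffOn hΩo hu (by norm_num)
  have hc2 : ∀ i j, ContDiffOn ℝ 2 (pd i (pd j u)) Ω := fun i j =>
    pd_contDiffOn hΩo (hc1 j) (by norm_num) i
  have hc3 : ∀ i j k, ContDiffOn ℝ 1 (pd i (pd j (pd k u))) Ω := fun i j k =>
    pd_contDiffOn hΩo (hc2 j k) (by norm_num) i
  have hdiff : ∀ {m : WithTop ℕ∞} {f : EuclideanSpace ℝ (Fin n) → ℝ}, ContDiffOn ℝ m f Ω →
      1 ≤ m → ∀ y ∈ Ω, DifferentiableAt ℝ f y := fun hf hm y hy =>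
    (hf.contDiffAt (hΩo.mem_nhds hy)).differentiableAt (by rintro rfl; simp at hm)
  have hd0 := hdiff hu (by norm_num)
  have hd1 := fun i => hdiff (hc1 i) (by norm_num)
  have hd2 := fun i j => hdiff (hc2 i j) (by norm_num)
  have hd3 := fun i j k => hdiff (hc3 i j k) le_rfl
  have hs2 : ∀ y ∈ Ω, ∀ i j, pd i (pd j u) y = pd j (pd i u) y := fun y hy i j =>
    pd_comm hΩo hu (by norm_num) hy i j
  have hs3 : ∀ y ∈ Ω, ∀ i j k, pd i (pd j (pd k u)) y = pd j (pd i (pd k u)) y :=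
    fun y hy i j k => pd_comm hΩo (hc1 k) (by norm_num) hy i j
  have hs3' : ∀ y ∈ Ω, ∀ i j k, pd i (pd j (pd k u)) y = pd i (pd k (pd j u)) y :=
    fun y hy i j k => pd_congr hΩo (fun z hz => hs2 z hz j k) hy i
  have hs4 : ∀ y ∈ Ω, ∀ i j k l,
      pd i (pd j (pd k (pd l u))) y = pd k (pd l (pd i (pd j u))) y := by
    intro y hy i j k l
    calc pd i (pd j (pd k (pd l u))) y = pd i (pd k (pd j (pd l u))) y :=
          pd_congr hΩo (fun z hz => hs3 z hz j k l) hy i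
      _ = pd k (pd i (pd j (pd l u))) y := pd_comm hΩo (hc2 j l) le_rfl hy i k
      _ = pd k (pd i (pd l (pd j u))) y := pd_congr hΩo (fun z hz => hs3' z hz i j l) hy k
      _ = pd k (pd l (pd i (pd j u))) y := pd_congr hΩo (fun z hz => hs3 z hz i l j) hy k
  have hGH : ∀ y ∈ Ω, (hess u y)⁻¹ * hess u y = 1 := fun y hy =>
    Matrix.nonsing_inv_mul _ (by rw [hMA y hy]; exact isUnit_one)
  have hHG : ∀ y ∈ Ω, hess u y * (hess u y)⁻¹ = 1 := fun y hy =>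
    Matrix.mul_nonsing_inv _ (by rw [hMA y hy]; exact isUnit_one)
  -- As `det D²u = 1`, the inverse is the adjugate, whose entries are polynomial in those of `D²u`.
  have hGadj : ∀ y ∈ Ω, (hess u y)⁻¹ = (hess u y).adjugate := fun y hy => by
    rw [Matrix.inv_def, hMA y hy]; simp
  have hHs : ∀ y ∈ Ω, (hess u y).transpose = hess u y := fun y hy => by
    ext i j; exact hs2 y hy j i
  have hGs : ∀ y ∈ Ω, ((hess u y)⁻¹).transpose = (hess u y)⁻¹ := fun y hy => by
    rw [Matrix.transpose_nonsing_inv, hHs y hy]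
  have hcG : ∀ a b, ContDiffOn ℝ 2 (fun y => (hess u y)⁻¹ a b) Ω := fun a b =>
    (contDiffOn_adjugate (M := hess u) hc2 a b).congr fun y hy => by rw [hGadj y hy]
  have hdG := fun a b => hdiff (hcG a b) (by norm_num)
  -- The Monge–Ampère equation differentiated once, and then a second time.
  have hMA1 : ∀ y ∈ Ω, ∀ k, ∑ a, ∑ b, (hess u y)⁻¹ a b * pd k (pd b (pd a u)) y = 0 := by
    intro y hy k
    have h := pd_det (M := hess u) (fun a b => hd2 a b y hy) k
    rw [pd_congr hΩo hMA hy k, pd_const, ← hGadj y hy] at h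
    exact h.symm
  have hMA2 : ∀ y ∈ Ω, ∀ l k, ∑ a, ∑ b, (pd l (fun z => (hess u z)⁻¹ a b) y
      * pd k (pd b (pd a u)) y + (hess u y)⁻¹ a b * pd l (pd k (pd b (pd a u))) y) = 0 := by
    intro y hy l k
    have h := pd_congr hΩo (fun z hz => hMA1 z hz k) hy l
    rw [pd_const, pd_sum fun a => DifferentiableAt.fun_sum fun b _ =>
      (hdG a b y hy).fun_mul (hd3 k b a y hy)] at h
    rw [← h]
    refine Finset.sum_congr rfl fun a _ => ?_
    rw [pd_sum fun b => (hdG a b y hy).fun_mul (hd3 k b a y hy)]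
    exact Finset.sum_congr rfl fun b _ => (pd_mul (hdG a b y hy) (hd3 k b a y hy) l).symm
  -- With `v = (D²u)⁻¹∇u`, differentiating `D²u v = ∇u` gives the derivatives of `v` (`hW`).
  set v : Fin n → EuclideanSpace ℝ (Fin n) → ℝ :=
    fun k y => ∑ l, (hess u y)⁻¹ k l * pd l u y with hv
  have hdv : ∀ k, ∀ y ∈ Ω, DifferentiableAt ℝ (v k) y := fun k y hy =>
    DifferentiableAt.fun_sum fun l _ => (hdG k l y hy).fun_mul (hd1 l y hy)
  have hHv : ∀ y ∈ Ω, ∀ m, ∑ k, pd m (pd k u) y * v k y = pd m u y := by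
    intro y hy m
    have h : (hess u y).mulVec ((hess u y)⁻¹.mulVec fun l => pd l u y) = fun l => pd l u y := by
      rw [Matrix.mulVec_mulVec, hHG y hy, Matrix.one_mulVec]
    exact congrFun h m
  have hW : ∀ y ∈ Ω, ∀ j m, ∑ k, (pd j (pd m (pd k u)) y * v k y
      + pd m (pd k u) y * pd j (v k) y) = pd j (pd m u) y := by
    intro y hy j m
    rw [← pd_congr hΩo (fun z hz => hHv z hz m) hy j,
      pd_sum fun k => (hd2 m k y hy).fun_mul (hdv k y hy)]
    exact Finset.sum_congr rfl fun k _ => (pd_mul (hd2 m k y hy) (hdv k y hy) j).symm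
  have hphi : ∀ y ∈ Ω, phiFn u y = (∑ k, v k y * pd k u y) - 2 * u y := by
    intro y _
    simp only [phiFn, hv, Finset.sum_mul]
    congr 1
    exact Finset.sum_congr rfl fun k _ => Finset.sum_congr rfl fun l _ => by ring
  -- The terms containing `∇u` without third derivatives cancel against `-2u`.
  have hphi1 : ∀ y ∈ Ω, ∀ j, pd j (phiFn u) y =
      -∑ k, ∑ m, pd j (pd k (pd m u)) y * (v m y * v k y) := by
    intro y hy j
    rw [pd_congr hΩo hphi hy j, pd_sub
      (DifferentiableAt.fun_sum fun k _ => (hdv k y hy).fun_mul (hd1 k y hy))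
      ((hd0 y hy).const_mul 2), pd_mul (differentiableAt_const _) (hd0 y hy), pd_const,
      pd_sum fun k => (hdv k y hy).fun_mul (hd1 k y hy)]
    simp only [fun k => pd_mul (hdv k y hy) (hd1 k y hy) j, Finset.sum_add_distrib]
    have e1 : ∑ k, v k y * pd j (pd k u) y = pd j u y := by
      rw [← hHv y hy j]; exact Finset.sum_congr rfl fun k _ => mul_comm _ _
    have e2 : ∑ k, pd j (v k) y * pd k u y =
        pd j u y - ∑ k, ∑ m, pd j (pd k (pd m u)) y * (v m y * v k y) := by
      calc ∑ k, pd j (v k) y * pd k u y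
          = ∑ k, ∑ m, pd j (v k) y * (pd k (pd m u) y * v m y) := by
            refine Finset.sum_congr rfl fun k _ => ?_
            rw [← hHv y hy k, Finset.mul_sum]
        _ = ∑ m, (∑ k, pd m (pd k u) y * pd j (v k) y) * v m y := by
            rw [Finset.sum_comm]
            refine Finset.sum_congr rfl fun m _ => ?_
            rw [Finset.sum_mul]
            exact Finset.sum_congr rfl fun k _ => by rw [hs2 y hy k m]; ring
        _ = ∑ m, (pd j (pd m u) y - ∑ k, pd j (pd m (pd k u)) y * v k y) * v m y := by
            refine Finset.sum_congr rfl fun m _ => ?_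
            rw [← hW y hy j m, Finset.sum_add_distrib]; ring
        _ = _ := by
            simp only [sub_mul, Finset.sum_sub_distrib, Finset.sum_mul, mul_assoc]
            rw [hHv y hy j]
    rw [e1, e2]; ring
  intro x hx
  have hphi2 : ∀ i j, pd i (pd j (phiFn u)) x =
      -∑ k, ∑ m, (pd i (pd j (pd k (pd m u))) x * (v m x * v k x) +
        pd j (pd k (pd m u)) x * (pd i (v m) x * v k x + v m x * pd i (v k) x)) := by
    intro i j
    have hvv := fun m k => (hdv m x hx).fun_mul (hdv k x hx)
    rw [pd_congr hΩo (fun y hy => hphi1 y hy j) hx i, pd_neg,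
      pd_sum fun k => DifferentiableAt.fun_sum fun m _ => (hd3 j k m x hx).fun_mul (hvv m k)]
    congr 1
    refine Finset.sum_congr rfl fun k _ => ?_
    rw [pd_sum fun m => (hd3 j k m x hx).fun_mul (hvv m k)]
    refine Finset.sum_congr rfl fun m _ => ?_
    rw [pd_mul (hd3 j k m x hx) (hvv m k), pd_mul (hdv m x hx) (hdv k x hx)]
  set A : Fin n → Matrix (Fin n) (Fin n) ℝ :=
    fun k => Matrix.of fun a b => pd k (pd a (pd b u)) x with hA
  set T : Matrix (Fin n) (Fin n) ℝ := Matrix.of (Tfn u x) with hTdef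
  have hTv : ∀ i j, T i j = ∑ k, pd i (pd j (pd k u)) x * v k x := by
    intro i j
    simp only [hTdef, Matrix.of_apply, Tfn, hv, Finset.mul_sum, mul_assoc]
  -- Derivative of the inverse, from `(D²u)⁻¹ D²u = 1`.
  have hdGm : ∀ l, (Matrix.of fun a b => pd l (fun z => (hess u z)⁻¹ a b) x) =
      -((hess u x)⁻¹ * A l * (hess u x)⁻¹) := by
    intro l
    set D : Matrix (Fin n) (Fin n) ℝ :=
      Matrix.of fun a b => pd l (fun z => (hess u z)⁻¹ a b) x with hD
    have hdH : ∀ c b, DifferentiableAt ℝ (fun z => hess u z c b) x := fun c b => hd2 c b x hx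
    have h : D * hess u x + (hess u x)⁻¹ * A l = 0 := by
      ext a b
      have h := pd_congr hΩo (fun z hz => congrFun (congrFun (hGH z hz) a) b) hx l
      simp only [Matrix.mul_apply] at h
      rw [pd_const, pd_sum fun c => (hdG a c x hx).fun_mul (hdH c b)] at h
      rw [Matrix.add_apply, Matrix.mul_apply, Matrix.mul_apply, ← Finset.sum_add_distrib,
        Matrix.zero_apply, ← h]
      exact Finset.sum_congr rfl fun c _ => (pd_mul (hdG a c x hx) (hdH c b) l).symm
    calc D = D * hess u x * (hess u x)⁻¹ := by rw [Matrix.mul_assoc, hHG x hx, Matrix.mul_one]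
      _ = _ := by rw [eq_neg_of_add_eq_zero_left h, Matrix.neg_mul]
  have hWm : (Matrix.of fun i k => pd i (v k) x) = 1 - T * (hess u x)⁻¹ := by
    set W : Matrix (Fin n) (Fin n) ℝ := Matrix.of fun i k => pd i (v k) x with hWdef
    have h : T + W * hess u x = hess u x := by
      ext j m
      rw [Matrix.add_apply, hTv, Matrix.mul_apply, ← Finset.sum_add_distrib]
      refine Eq.trans (Finset.sum_congr rfl fun k _ => ?_) (hW x hx j m)
      rw [hs2 x hx m k, mul_comm (pd k (pd m u) x)]; rfl
    calc W = W * hess u x * (hess u x)⁻¹ := by rw [Matrix.mul_assoc, hHG x hx, Matrix.mul_one]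
      _ = _ := by rw [eq_sub_of_add_eq' h, Matrix.sub_mul, hHG x hx]
  refine contraction_identity (T := T) (P := Matrix.of fun i j => pd i (pd j (phiFn u)) x)
    (A := A) (B := fun k l => Matrix.of fun a b => pd k (pd l (pd a (pd b u))) x)
    (v := fun k => v k x) (hGs x hx) ?_ ?_ hWm ?_ ?_ ?_
  · ext i j
    rw [Matrix.transpose_apply, hTv, hTv]
    exact Finset.sum_congr rfl fun k _ => by rw [hs3 x hx j i k]
  · ext i j
    rw [hTv, Matrix.sum_apply]
    refine Finset.sum_congr rfl fun k _ => ?_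
    rw [hs3' x hx, hs3 x hx i k j]
    simp [hA, mul_comm]
  · ext i j
    have e : ∀ k m, pd i (pd j (pd k (pd m u))) x * (v m x * v k x) +
        pd j (pd k (pd m u)) x * (pd i (v m) x * v k x + v m x * pd i (v k) x) =
        (v k x * v m x) * pd k (pd m (pd i (pd j u))) x +
        (pd i (v m) x * (pd m (pd j (pd k u)) x * v k x) +
          pd i (v k) x * (pd k (pd j (pd m u)) x * v m x)) := by
      intro k m
      rw [hs4 x hx i j k m, hs3' x hx j k m, hs3 x hx j m k, hs3 x hx k j m,
        ← hs3' x hx j m k, ← hs3 x hx j m k]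
      ring
    have hWT : ∑ k, ∑ m, pd i (v k) x * (pd k (pd j (pd m u)) x * v m x) =
        ((Matrix.of fun i k => pd i (v k) x) * T) i j := by
      rw [Matrix.mul_apply]
      exact Finset.sum_congr rfl fun k _ => by rw [hTv, Finset.mul_sum]; rfl
    have hWT' : ∑ k, ∑ m, pd i (v m) x * (pd m (pd j (pd k u)) x * v k x) =
        ((Matrix.of fun i k => pd i (v k) x) * T) i j := by
      rw [Finset.sum_comm, hWT]
    rw [Matrix.of_apply, hphi2]
    simp only [e, Finset.sum_add_distrib, hWT, hWT']
    simp only [Matrix.sub_apply, Matrix.neg_apply, Matrix.sum_apply, Matrix.smul_apply,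
      Matrix.of_apply, smul_eq_mul]
    ring
  · intro k
    exact hMA1 x hx k
  · intro l k
    have h := hMA2 x hx l k
    simp only [Finset.sum_add_distrib] at h
    have e1 : ((Matrix.of fun a b => pd l (fun z => (hess u z)⁻¹ a b) x) * A k).trace +
        ((hess u x)⁻¹ * Matrix.of fun a b => pd l (pd k (pd a (pd b u))) x).trace = 0 := h
    rw [hdGm, Matrix.neg_mul, Matrix.trace_neg] at e1
    linarith
end
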